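/- arXiv:2604.23423 — 7 statements merged into one kernel-verified Lean document; each statement's English description precedes it below -/
import Mathlib

section
/- Let R be a ring (not necessarily commutative, not necessarily with unity) that has exactly n two-sided zero divisors, where n > 0. Then R is finite and |R| ≤ (n+1)^2. -/
/-!
Let `D₀` be the set of two-sided zero divisors together with `0`, so `|D₀| = n + 1`. If an additive
endomorphism `f` of `R` has both its kernel and its range inside `D₀`, then
`|R| = |ker f| * |range f| ≤ (n + 1) ^ 2` (`finite_and_card_le_of_endomorphism`). The proof produces
such an `f` as a left or right multiplication.

* If `R` has no nonzero element of square zero, then `x * y = 0` implies `y * x = 0`, and left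
  multiplication by any two-sided zero divisor works.
* Otherwise fix `a ≠ 0` with `a * a = 0`. Then `R` is finite
  (`finite_of_mul_self_eq_zero`): the maps `r ↦ a * r * a` on `R`, `r ↦ a * r` on the kernel of
  the first, and `r ↦ r * a` on the kernel of the second all take values in `D₀`, and the kernel of
  the last one lies in `D₀`.
  * If some `c ≠ 0` satisfies `c * r = 0` for all `r`, right multiplication by `c` works.
  * If there is no such `c`, every right zero divisor is a left zero divisor: were `x` not a left
    zero divisor, finiteness would give `x * R = R`, and `c * x = 0` would force `c * R = 0`. Hence
    left multiplication by `a` works.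
-/

/-- `a` is a left zero divisor: `a ≠ 0` and there is a nonzero `b` with `a * b = 0`. -/
def IsLeftZeroDivisor {R : Type*} [NonUnitalRing R] (a : R) : Prop :=
  a ≠ 0 ∧ ∃ b : R, b ≠ 0 ∧ a * b = 0

/-- `a` is a right zero divisor: `a ≠ 0` and there is a nonzero `c` with `c * a = 0`. -/
def IsRightZeroDivisor {R : Type*} [NonUnitalRing R] (a : R) : Prop :=
  a ≠ 0 ∧ ∃ c : R, c ≠ 0 ∧ c * a = 0

/-- `a` is a two-sided zero divisor: it is both a left and a right zero divisor. -/
def IsTwoSidedZeroDivisor {R : Type*} [NonUnitalRing R] (a : R) : Prop :=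
  IsLeftZeroDivisor a ∧ IsRightZeroDivisor a

/-- The two-sided zero divisors together with `0`. -/
def zeroOrZeroDivisors (R : Type*) [NonUnitalRing R] : Set R :=
  insert 0 {a : R | IsTwoSidedZeroDivisor a}

theorem mem_zeroOrZeroDivisors {R : Type*} [NonUnitalRing R] {x b c : R}
    (hb : b ≠ 0) (hxb : x * b = 0) (hc : c ≠ 0) (hcx : c * x = 0) :
    x ∈ zeroOrZeroDivisors R := by
  by_cases hx : x = 0
  · exact Or.inl hx
  · exact Or.inr ⟨⟨hx, b, hb, hxb⟩, ⟨hx, c, hc, hcx⟩⟩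

/-- A finite-to-one criterion: all nonempty fibres of `f` on the subgroup `S` are translates of
`S ∩ ker f`. -/
theorem finite_of_finite_image_of_finite_ker {R : Type*} [AddCommGroup R] (S : AddSubgroup R)
    (f : R →+ R) {T U : Set R} (hT : T.Finite) (hU : U.Finite) (him : ∀ x ∈ S, f x ∈ T)
    (hker : ∀ x ∈ S, f x = 0 → x ∈ U) : (S : Set R).Finite := by
  refine Set.Finite.of_finite_fibers f (hT.subset ?_) ?_
  · rintro _ ⟨x, hx, rfl⟩
    exact him x hx
  · rintro _ ⟨x, hx, rfl⟩
    refine (hU.image (fun u => u + x)).subset ?_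
    rintro y ⟨hy, hyx⟩
    have hyx' : f y = f x := hyx
    exact ⟨y - x, hker _ (S.sub_mem hy hx) (by rw [map_sub, hyx', sub_self]), by simp⟩

theorem finite_and_card_le_of_endomorphism {R : Type*} [AddCommGroup R] {T : Set R}
    (hT : T.Finite) (f : R →+ R) (hker : ∀ x, f x = 0 → x ∈ T) (him : ∀ x, f x ∈ T) :
    Finite R ∧ Nat.card R ≤ T.ncard ^ 2 := by
  have hfin : Finite R := by
    rw [← Set.finite_univ_iff]
    simpa using finite_of_finite_image_of_finite_ker ⊤ f hT hT (fun x _ => him x)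
      (fun x _ => hker x)
  refine ⟨hfin, ?_⟩
  have h1 : Nat.card f.ker ≤ T.ncard :=
    Set.ncard_le_ncard (s := (f.ker : Set R)) (fun x hx => hker x hx) hT
  have h2 : Nat.card f.range ≤ T.ncard := by
    refine Set.ncard_le_ncard (s := (f.range : Set R)) ?_ hT
    rintro _ ⟨x, rfl⟩
    exact him x
  rw [← f.ker.card_mul_index, AddSubgroup.index_ker, sq]
  exact Nat.mul_le_mul h1 h2

theorem finite_of_mul_self_eq_zero {R : Type*} [NonUnitalRing R]
    (hT : (zeroOrZeroDivisors R).Finite) {a : R} (ha : a ≠ 0) (haa : a * a = 0) : Finite R := by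
  let l : R →+ R := AddMonoidHom.mulLeft a
  let r : R →+ R := AddMonoidHom.mulRight a
  -- An element annihilated by `a` on both sides is in the finite set.
  have key : ∀ x, a * x = 0 → x * a = 0 → x ∈ zeroOrZeroDivisors R :=
    fun x h h' => mem_zeroOrZeroDivisors ha h' ha h
  have hl : (l.ker : Set R).Finite := by
    refine finite_of_finite_image_of_finite_ker l.ker r hT hT (fun x hx => ?_)
      (fun x hx hx' => key x hx hx')
    have hx' : a * x = 0 := hx
    exact key (x * a) (by rw [← mul_assoc, hx', zero_mul]) (by rw [mul_assoc, haa, mul_zero])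
  have hrl : ((r.comp l).ker : Set R).Finite := by
    refine finite_of_finite_image_of_finite_ker _ l hT hl (fun x hx => ?_) (fun x _ hx => hx)
    exact key (a * x) (by rw [← mul_assoc, haa, zero_mul]) hx
  have htop : ((⊤ : AddSubgroup R) : Set R).Finite := by
    refine finite_of_finite_image_of_finite_ker ⊤ (r.comp l) hT hrl (fun x _ => ?_)
      (fun x _ hx => hx)
    refine key (a * x * a) ?_ (by rw [mul_assoc, haa, mul_zero])
    rw [← mul_assoc, ← mul_assoc, haa, zero_mul, zero_mul]
  rw [← Set.finite_univ_iff]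
  simpa using htop

/-- In a finite ring without nonzero `c` such that `c * R = 0`, every right zero divisor is a left
zero divisor. -/
theorem exists_mul_eq_zero_of_mul_eq_zero {R : Type*} [NonUnitalRing R] [Finite R]
    (hR : ∀ c : R, (∀ r, c * r = 0) → c = 0) {c x : R} (hc : c ≠ 0) (hcx : c * x = 0) :
    ∃ b : R, b ≠ 0 ∧ x * b = 0 := by
  by_contra! hx
  have hinj : Function.Injective (AddMonoidHom.mulLeft x) := by
    rw [injective_iff_map_eq_zero]
    intro b hb
    by_contra hb0
    exact hx b hb0 hb
  refine hc (hR c fun y => ?_)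
  obtain ⟨z, rfl⟩ := Finite.injective_iff_surjective.mp hinj y
  change c * (x * z) = 0
  rw [← mul_assoc, hcx, zero_mul]

/-- A ring with exactly `n > 0` two-sided zero divisors is finite of order at most `(n+1)^2`. -/
theorem finite_of_finitely_many_twoSided_zeroDivisors
    {R : Type*} [NonUnitalRing R] (n : ℕ) (hn : 0 < n)
    (hfin : {a : R | IsTwoSidedZeroDivisor a}.Finite)
    (hcard : {a : R | IsTwoSidedZeroDivisor a}.ncard = n) :
    Finite R ∧ Nat.card R ≤ (n + 1) ^ 2 := by
  have hT : (zeroOrZeroDivisors R).Finite := hfin.insert 0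
  have hTcard : (zeroOrZeroDivisors R).ncard = n + 1 := by
    rw [zeroOrZeroDivisors, Set.ncard_insert_of_notMem (fun h => h.1.1 rfl) hfin, hcard]
  rw [← hTcard]
  by_cases hsq : ∃ a : R, a ≠ 0 ∧ a * a = 0
  · obtain ⟨a, ha, haa⟩ := hsq
    have : Finite R := finite_of_mul_self_eq_zero hT ha haa
    by_cases hR : ∀ c : R, (∀ r, c * r = 0) → c = 0
    · have key : ∀ x, a * x = 0 → x ∈ zeroOrZeroDivisors R := fun x hx => by
        obtain ⟨b, hb, hxb⟩ := exists_mul_eq_zero_of_mul_eq_zero hR ha hx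
        exact mem_zeroOrZeroDivisors hb hxb ha hx
      refine finite_and_card_le_of_endomorphism hT (AddMonoidHom.mulLeft a) key (fun x => ?_)
      exact key (a * x) (by rw [← mul_assoc, haa, zero_mul])
    · push Not at hR
      obtain ⟨c, hcR, hc⟩ := hR
      refine finite_and_card_le_of_endomorphism hT (AddMonoidHom.mulRight c)
        (fun x hx => mem_zeroOrZeroDivisors hc hx hc (hcR x)) (fun x => ?_)
      exact mem_zeroOrZeroDivisors (x := x * c) hc (by rw [mul_assoc, hcR, mul_zero]) hc (hcR _)
  · push Not at hsq
    -- In a ring without nonzero square-zero elements, `(y * x) ^ 2 = y * (x * y) * x = 0`.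
    have hcomm : ∀ x y : R, x * y = 0 → y * x = 0 := fun x y h => by
      by_contra hyx
      refine hsq _ hyx ?_
      rw [mul_assoc, ← mul_assoc x, h, zero_mul, mul_zero]
    obtain ⟨a, ⟨ha, -⟩, -, c, hc, hca⟩ : {a : R | IsTwoSidedZeroDivisor a}.Nonempty :=
      Set.nonempty_of_ncard_ne_zero (by omega)
    refine finite_and_card_le_of_endomorphism hT (AddMonoidHom.mulLeft a)
      (fun x hx => mem_zeroOrZeroDivisors ha (hcomm _ _ hx) ha hx) (fun x => ?_)
    have hcax : c * (a * x) = 0 := by rw [← mul_assoc, hca, zero_mul]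
    exact mem_zeroOrZeroDivisors (x := a * x) hc (hcomm _ _ hcax) hc hcax
end

section
/- Let R be a ring (not necessarily commutative, not necessarily with unity) that has exactly n left zero divisors, where n > 0. Then R is finite and |R| ≤ (n+1)^2. -/
/-- A ring with exactly `n > 0` left zero divisors is finite of order at most `(n+1)^2`. -/
theorem finite_of_finitely_many_left_zeroDivisors
    {R : Type*} [NonUnitalRing R] (n : ℕ) (hn : 0 < n)
    (hfin : {a : R | IsLeftZeroDivisor a}.Finite)
    (hcard : {a : R | IsLeftZeroDivisor a}.ncard = n) :
    Finite R ∧ Nat.card R ≤ (n + 1) ^ 2 := by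
  obtain ⟨a, ha, b, hb, hab⟩ := Set.nonempty_of_ncard_ne_zero (by omega :
    {a : R | IsLeftZeroDivisor a}.ncard ≠ 0)
  set Z : Set R := insert 0 {a : R | IsLeftZeroDivisor a} with hZ
  have hZfin : Z.Finite := hfin.insert 0
  have hZcard : Z.ncard ≤ n + 1 := hcard ▸ Set.ncard_insert_le _ _
  have memZ : ∀ x y : R, y ≠ 0 → x * y = 0 → x ∈ Z := fun x y hy hxy =>
    (eq_or_ne x 0).imp id fun hx => ⟨hx, y, hy, hxy⟩
  let f : R →+ R := AddMonoidHom.mulRight a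
  have hker : (f.ker : Set R) ⊆ Z := fun x hx => memZ x a ha hx
  have hran : (f.range : Set R) ⊆ Z := by
    rintro _ ⟨r, rfl⟩
    refine memZ _ b hb ?_
    change r * a * b = 0
    rw [mul_assoc, hab, mul_zero]
  have hprod : Nat.card f.ker * Nat.card f.range = Nat.card R := by
    rw [← AddSubgroup.index_ker, AddSubgroup.card_mul_index]
  have : Finite f.ker := hZfin.subset hker
  have : Finite f.range := hZfin.subset hran
  have h1 : Nat.card f.ker ≤ n + 1 := (Set.ncard_le_ncard hker hZfin).trans hZcard
  have h2 : Nat.card f.range ≤ n + 1 := (Set.ncard_le_ncard hran hZfin).trans hZcard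
  refine ⟨Nat.finite_of_card_ne_zero ?_, ?_⟩
  · rw [← hprod]
    exact mul_ne_zero Nat.card_pos.ne' Nat.card_pos.ne'
  · rw [← hprod, sq]
    exact Nat.mul_le_mul h1 h2
end

section
/- Let R be a ring (not necessarily commutative, not necessarily with unity) that has exactly n right zero divisors, where n > 0. Then R is finite and |R| ≤ (n+1)^2. -/
/-- A ring with exactly `n > 0` right zero divisors is finite of order at most `(n+1)^2`. -/
theorem finite_of_finitely_many_right_zeroDivisors
    {R : Type*} [NonUnitalRing R] (n : ℕ) (hn : 0 < n)
    (hfin : {a : R | IsRightZeroDivisor a}.Finite)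
    (hcard : {a : R | IsRightZeroDivisor a}.ncard = n) :
    Finite R ∧ Nat.card R ≤ (n + 1) ^ 2 := by
  obtain ⟨a, ha, c, hc, hca⟩ : {a : R | IsRightZeroDivisor a}.Nonempty := by
    rw [← Set.ncard_pos hfin, hcard]
    exact hn
  have hZfin : (insert 0 {a : R | IsRightZeroDivisor a}).Finite := hfin.insert 0
  have hZcard : (insert 0 {a : R | IsRightZeroDivisor a}).ncard ≤ n + 1 :=
    hcard ▸ Set.ncard_insert_le 0 _
  have hmem : ∀ d x : R, d ≠ 0 → d * x = 0 → x ∈ insert 0 {a : R | IsRightZeroDivisor a} :=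
    fun d x hd h => (eq_or_ne x 0).imp id fun hx => ⟨hx, d, hd, h⟩
  let f : R →+ R := AddMonoidHom.mulLeft a
  have hker : (f.ker : Set R) ⊆ insert 0 {a : R | IsRightZeroDivisor a} :=
    fun x hx => hmem a x ha hx
  have hrange : (f.range : Set R) ⊆ insert 0 {a : R | IsRightZeroDivisor a} := by
    rintro _ ⟨x, rfl⟩
    refine hmem c _ hc ?_
    change c * (a * x) = 0
    rw [← mul_assoc, hca, zero_mul]
  have hcardR : Nat.card f.ker * Nat.card f.range = Nat.card R := by
    rw [← AddSubgroup.index_ker, AddSubgroup.card_mul_index]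
  have : Finite f.ker := hZfin.subset hker
  have : Finite f.range := hZfin.subset hrange
  have hk : Nat.card f.ker ≤ n + 1 := (Set.ncard_le_ncard hker hZfin).trans hZcard
  have hr : Nat.card f.range ≤ n + 1 := (Set.ncard_le_ncard hrange hZfin).trans hZcard
  refine ⟨Nat.finite_of_card_ne_zero ?_, ?_⟩
  · rw [← hcardR]
    exact mul_ne_zero Nat.card_pos.ne' Nat.card_pos.ne'
  · rw [← hcardR, sq]
    exact Nat.mul_le_mul hk hr
end

section
/- Let R be a commutative ring (not necessarily with unity) that has exactly n zero divisors, where n > 0. Then R is finite and |R| ≤ (n+1)^2. -/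
/-!
Let `a` be a zero divisor, say `a * b = 0` with `a` and `b` nonzero, and consider the additive
endomorphism `r ↦ a * r`. Nonzero elements of its kernel are annihilated by `a`, and nonzero
elements of its range are annihilated by `b`, so both subgroups lie in the set of zero divisors
together with `0`, which has `n + 1` elements. Since `|R| = |ker| * |range|`, the bound follows.
-/

/-- `a` is a zero divisor in a commutative ring: `a ≠ 0` and there is a nonzero `b`
with `a * b = 0`. -/
def IsZeroDivisor {R : Type*} [NonUnitalCommRing R] (a : R) : Prop :=
  a ≠ 0 ∧ ∃ b : R, b ≠ 0 ∧ a * b = 0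

/-- A commutative ring with exactly `n > 0` zero divisors is finite of order at most
`(n+1)^2`. -/
theorem finite_of_finitely_many_zeroDivisors_comm
    {R : Type*} [NonUnitalCommRing R] (n : ℕ) (hn : 0 < n)
    (hfin : {a : R | IsZeroDivisor a}.Finite)
    (hcard : {a : R | IsZeroDivisor a}.ncard = n) :
    Finite R ∧ Nat.card R ≤ (n + 1) ^ 2 := by
  obtain ⟨a, ha, b, hb, hab⟩ : {a : R | IsZeroDivisor a}.Nonempty := by
    rw [← Set.ncard_pos hfin]
    omega
  have annihilated_mem : ∀ c : R, c ≠ 0 → ∀ x : R, x * c = 0 →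
      x ∈ insert 0 {a : R | IsZeroDivisor a} := by
    intro c hc x hx
    by_cases h0 : x = 0
    · exact Or.inl h0
    · exact Or.inr ⟨h0, c, hc, hx⟩
  have subgroup_bound : ∀ H : AddSubgroup R, (∃ c : R, c ≠ 0 ∧ ∀ x ∈ H, x * c = 0) →
      0 < Nat.card H ∧ Nat.card H ≤ n + 1 := by
    rintro H ⟨c, hc, hH⟩
    have hsub : (H : Set R) ⊆ insert 0 {a : R | IsZeroDivisor a} :=
      fun x hx => annihilated_mem c hc x (hH x hx)
    have : Finite H := ((hfin.insert 0).subset hsub).to_subtype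
    refine ⟨Nat.card_pos, ?_⟩
    calc Nat.card H = (H : Set R).ncard := rfl
      _ ≤ (insert 0 {a : R | IsZeroDivisor a}).ncard := Set.ncard_le_ncard hsub (hfin.insert 0)
      _ ≤ {a : R | IsZeroDivisor a}.ncard + 1 := Set.ncard_insert_le _ _
      _ = n + 1 := by rw [hcard]
  let f : R →+ R := AddMonoidHom.mulLeft a
  have hker := subgroup_bound f.ker ⟨a, ha, fun x hx => by
    rw [mul_comm]
    exact hx⟩
  have hrange := subgroup_bound f.range ⟨b, hb, by
    rintro _ ⟨r, rfl⟩
    change a * r * b = 0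
    rw [mul_right_comm, hab, zero_mul]⟩
  have hR : Nat.card f.ker * Nat.card f.range = Nat.card R := by
    rw [← AddSubgroup.index_ker, AddSubgroup.card_mul_index]
  constructor
  · -- `Nat.card` of an infinite type is `0`, so a positive value forces finiteness.
    apply Nat.finite_of_card_ne_zero
    rw [← hR]
    exact (Nat.mul_pos hker.1 hrange.1).ne'
  · rw [← hR, pow_two]
    exact Nat.mul_le_mul hker.2 hrange.2
end

section
/- Let p be a prime. The ring ℤ/p²ℤ has exactly p − 1 zero divisors, namely the classes of p, 2p, …, (p−1)p, and its order equals ((p−1)+1)² = p²; hence the bound |R| ≤ (n+1)² for a ring with exactly n > 0 zero divisors is attained by ℤ/p²ℤ with n = p − 1. -/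
/-! In `ℤ/p²ℤ` every nonzero non-unit is the class of some `k * p` with `0 < k < p`, and each such
class is annihilated by `p`, which is itself nonzero. These classes are pairwise distinct because
the representatives `k * p` are smaller than `p ^ 2`, so there are exactly `p - 1` of them. -/

/-- Multiples of `p` by distinct integers below `p` have distinct residues modulo `p ^ 2`,
since they are already reduced. -/
lemma natCast_mul_self_inj {p j k : ℕ} (hj : j < p) (hk : k < p)
    (h : (j : ZMod (p ^ 2)) * (p : ZMod (p ^ 2)) = (k : ZMod (p ^ 2)) * (p : ZMod (p ^ 2))) :
    j = k := by
  have hp : 0 < p := by omega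
  have h' : ((j * p : ℕ) : ZMod (p ^ 2)) = ((k * p : ℕ) : ZMod (p ^ 2)) := by
    push_cast; exact h
  rw [ZMod.natCast_eq_natCast_iff] at h'
  have hlt : ∀ i < p, i * p < p ^ 2 := fun i hi => by
    rw [sq]; exact Nat.mul_lt_mul_of_pos_right hi hp
  exact Nat.eq_of_mul_eq_mul_right hp (h'.eq_of_lt_of_lt (hlt j hj) (hlt k hk))

/-- A class prime to `p` is a unit modulo `p ^ 2`, so a zero divisor is a multiple of `p`;
conversely each `k * p` is killed by `p`. -/
lemma zeroDivisors_zmod_sq (p : ℕ) (hp : p.Prime) :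
    {a : ZMod (p ^ 2) | a ≠ 0 ∧ ∃ b : ZMod (p ^ 2), b ≠ 0 ∧ a * b = 0} =
      (fun k : ℕ => (k : ZMod (p ^ 2)) * (p : ZMod (p ^ 2))) ''
        {k : ℕ | 1 ≤ k ∧ k ≤ p - 1} := by
  have hpos := hp.pos
  haveI : NeZero (p ^ 2) := ⟨pow_ne_zero 2 hp.ne_zero⟩
  ext a
  constructor
  · rintro ⟨ha, b, hb, hab⟩
    have hdvd : p ∣ a.val := by
      by_contra hnd
      have hcop : Nat.Coprime a.val (p ^ 2) :=
        (((Nat.Prime.coprime_iff_not_dvd hp).2 hnd).symm).pow_right 2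
      have hu : IsUnit a := by
        rw [← ZMod.natCast_zmod_val a]
        exact (ZMod.isUnit_iff_coprime _ _).2 hcop
      exact hb (hu.mul_right_eq_zero.1 hab)
    obtain ⟨k, hk⟩ := hdvd
    have hlt : p * k < p * p := by
      rw [← hk, ← sq]; exact ZMod.val_lt a
    have hkp : k < p := Nat.lt_of_mul_lt_mul_left hlt
    have hk0 : k ≠ 0 := by
      rintro rfl
      exact ha ((ZMod.val_eq_zero a).1 (by simpa using hk))
    refine ⟨k, ⟨by omega, by omega⟩, ?_⟩
    change (k : ZMod (p ^ 2)) * (p : ZMod (p ^ 2)) = a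
    rw [← ZMod.natCast_zmod_val a, hk]
    push_cast
    ring
  · rintro ⟨k, ⟨h1, h2⟩, rfl⟩
    have hne : ∀ j, 1 ≤ j → j < p → (j : ZMod (p ^ 2)) * (p : ZMod (p ^ 2)) ≠ 0 := by
      intro j hj hjp h
      have := natCast_mul_self_inj (k := 0) hjp hpos (by simpa using h)
      omega
    refine ⟨hne k h1 (by omega), (p : ZMod (p ^ 2)), ?_, ?_⟩
    · simpa using hne 1 le_rfl hp.one_lt
    · have h0 : (p : ZMod (p ^ 2)) * (p : ZMod (p ^ 2)) = 0 := by
        rw [← sq]; exact_mod_cast ZMod.natCast_self (p ^ 2)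
      change (k : ZMod (p ^ 2)) * (p : ZMod (p ^ 2)) * (p : ZMod (p ^ 2)) = 0
      rw [mul_assoc, h0, mul_zero]


/-- For a prime `p`, the ring `ℤ/p²ℤ` has exactly `p - 1` zero divisors, namely the
classes of `p, 2p, …, (p-1)p`, and its order is `((p-1)+1)² = p²`; so the bound
`|R| ≤ (n+1)²` is attained with `n = p - 1`. -/
theorem zmod_p_sq_attains_bound (p : ℕ) (hp : p.Prime) :
    {a : ZMod (p ^ 2) | a ≠ 0 ∧ ∃ b : ZMod (p ^ 2), b ≠ 0 ∧ a * b = 0} =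
      (fun k : ℕ => (k : ZMod (p ^ 2)) * (p : ZMod (p ^ 2))) '' {k : ℕ | 1 ≤ k ∧ k ≤ p - 1} ∧
    {a : ZMod (p ^ 2) | a ≠ 0 ∧ ∃ b : ZMod (p ^ 2), b ≠ 0 ∧ a * b = 0}.ncard = p - 1 ∧
    Nat.card (ZMod (p ^ 2)) = ((p - 1) + 1) ^ 2 := by
  have hpos := hp.pos
  refine ⟨zeroDivisors_zmod_sq p hp, ?_, ?_⟩
  · rw [zeroDivisors_zmod_sq p hp, Set.ncard_image_of_injOn]
    · change (Set.Icc 1 (p - 1)).ncard = p - 1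
      rw [← Finset.coe_Icc, Set.ncard_coe_finset, Nat.card_Icc]
      omega
    · rintro j ⟨_, hj⟩ k ⟨_, hk⟩ h
      exact natCast_mul_self_inj (by omega) (by omega) h
  · rw [Nat.card_zmod, Nat.sub_add_cancel hpos]
end

section
/- Let R be a ring and let a ∈ R be a left zero divisor that is not a right zero divisor, with b ∈ R nonzero and ab = 0. Then: (i) for every two-sided zero divisor z of R, the element za is a two-sided zero divisor of R lying in Ra, and the map z ↦ za is injective on the set of two-sided zero divisors of R; (ii) every element of Ra that is a right zero divisor of the ring Ra (with multiplication inherited from R) is a two-sided zero divisor of Ra, since (xa)(ba) = 0 with ba ≠ 0. -/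
/-- Since `a` is not a right zero divisor, right multiplication by `a` has trivial kernel. -/
theorem mul_ne_zero_of_not_isRightZeroDivisor {R : Type*} [NonUnitalRing R] {a : R}
    (ha : a ≠ 0) (hright : ¬ IsRightZeroDivisor a) {c : R} (hc : c ≠ 0) : c * a ≠ 0 :=
  fun h => hright ⟨ha, c, hc, h⟩

/-- Let `a` be a left zero divisor that is not a right zero divisor, with `b ≠ 0` and
`a * b = 0`, and write `Ra = {x * a : x ∈ R}`. Then:
(i) for every two-sided zero divisor `z` of `R`, the element `z * a` is a two-sided
zero divisor of `R` lying in `Ra`, and `z ↦ z * a` is injective on the set of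
two-sided zero divisors of `R`;
(ii) every right zero divisor of the ring `Ra` (multiplication inherited from `R`)
is a two-sided zero divisor of `Ra`, since `(x * a) * (b * a) = 0` with `b * a ≠ 0`. -/
theorem twoSided_zeroDivisors_embed_in_Ra
    {R : Type*} [NonUnitalRing R] (a b : R)
    (hb : b ≠ 0) (hab : a * b = 0)
    (hleft : IsLeftZeroDivisor a) (hright : ¬ IsRightZeroDivisor a) :
    (∀ z : R, IsTwoSidedZeroDivisor z →
      IsTwoSidedZeroDivisor (z * a) ∧ z * a ∈ {y : R | ∃ x : R, x * a = y}) ∧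
    Set.InjOn (fun z : R => z * a) {z : R | IsTwoSidedZeroDivisor z} ∧
    (b * a ≠ 0 ∧ (∀ x : R, (x * a) * (b * a) = 0) ∧
      ∀ y ∈ {y : R | ∃ x : R, x * a = y},
        (y ≠ 0 ∧ ∃ c ∈ {y : R | ∃ x : R, x * a = y}, c ≠ 0 ∧ c * y = 0) →
        (∃ c ∈ {y : R | ∃ x : R, x * a = y}, c ≠ 0 ∧ c * y = 0) ∧
        (∃ d ∈ {y : R | ∃ x : R, x * a = y}, d ≠ 0 ∧ y * d = 0)) := by
  have hne : ∀ {c : R}, c ≠ 0 → c * a ≠ 0 :=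
    fun hc => mul_ne_zero_of_not_isRightZeroDivisor hleft.1 hright hc
  have hkill : ∀ x : R, (x * a) * (b * a) = 0 := fun x => by
    rw [mul_assoc, ← mul_assoc a b a, hab, zero_mul, mul_zero]
  refine ⟨?_, ?_, hne hb, hkill, ?_⟩
  · rintro z ⟨⟨hz, -⟩, -, c, hc, hcz⟩
    -- `b` annihilates `z * a` on the right, and the left annihilator `c` of `z` still works.
    exact ⟨⟨⟨hne hz, b, hb, by rw [mul_assoc, hab, mul_zero]⟩,
      hne hz, c, hc, by rw [← mul_assoc, hcz, zero_mul]⟩, z, rfl⟩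
  · intro x _ y _ hxy
    by_contra h
    exact hne (sub_ne_zero.mpr h) (by rw [sub_mul]; exact sub_eq_zero.mpr hxy)
  · rintro y ⟨x, rfl⟩ ⟨-, hc⟩
    exact ⟨hc, b * a, ⟨b, rfl⟩, hne hb, hkill x⟩
end

section
/- Let R be a ring in which every left zero divisor is a two-sided zero divisor, and suppose R has exactly n two-sided zero divisors with n > 0. Then R has exactly n left zero divisors, and hence R is finite with |R| ≤ (n+1)^2. -/
/-- If every left zero divisor of `R` is a two-sided zero divisor and `R` has exactly
`n > 0` two-sided zero divisors, then `R` has exactly `n` left zero divisors, and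
`R` is finite with `|R| ≤ (n+1)^2`. -/
theorem finite_of_left_eq_twoSided
    {R : Type*} [NonUnitalRing R] (n : ℕ) (hn : 0 < n)
    (h : ∀ a : R, IsLeftZeroDivisor a → IsTwoSidedZeroDivisor a)
    (hfin : {a : R | IsTwoSidedZeroDivisor a}.Finite)
    (hcard : {a : R | IsTwoSidedZeroDivisor a}.ncard = n) :
    ({a : R | IsLeftZeroDivisor a}.Finite ∧ {a : R | IsLeftZeroDivisor a}.ncard = n) ∧
    Finite R ∧ Nat.card R ≤ (n + 1) ^ 2 := by
  have heq : {a : R | IsLeftZeroDivisor a} = {a : R | IsTwoSidedZeroDivisor a} :=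
    Set.ext fun a => ⟨h a, fun ha => ha.1⟩
  rw [heq]
  refine ⟨⟨hfin, hcard⟩, ?_⟩
  obtain ⟨a, ⟨ha, b, hb, hab⟩, -⟩ : {a : R | IsTwoSidedZeroDivisor a}.Nonempty :=
    Set.nonempty_of_ncard_ne_zero (by omega)
  have key : ∀ H : AddSubgroup R, (∀ x ∈ H, ∃ c : R, c ≠ 0 ∧ x * c = 0) →
      Finite H ∧ Nat.card H ≤ n + 1 := by
    intro H hH
    have hsub : (H : Set R) ⊆ insert 0 {a : R | IsTwoSidedZeroDivisor a} := by
      intro x hx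
      by_cases hx0 : x = 0
      · exact Or.inl hx0
      · exact Or.inr (h x ⟨hx0, hH x hx⟩)
    refine ⟨(hfin.insert 0).subset hsub, ?_⟩
    calc Nat.card H = (H : Set R).ncard := rfl
      _ ≤ (insert 0 {a : R | IsTwoSidedZeroDivisor a}).ncard :=
        Set.ncard_le_ncard hsub (hfin.insert 0)
      _ ≤ n + 1 := hcard ▸ Set.ncard_insert_le _ _
  let f : R →+ R := AddMonoidHom.mulRight a
  obtain ⟨hkf, hk⟩ := key f.ker fun x hx => ⟨a, ha, hx⟩
  obtain ⟨hrf, hr⟩ := key f.range (by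
    rintro _ ⟨x, rfl⟩
    exact ⟨b, hb, by simp [f, mul_assoc, hab]⟩)
  have hmul : Nat.card f.ker * Nat.card f.range = Nat.card R := by
    rw [← AddSubgroup.index_ker, AddSubgroup.card_mul_index]
  refine ⟨Nat.finite_of_card_ne_zero ?_, ?_⟩
  · rw [← hmul]
    exact mul_ne_zero Nat.card_pos.ne' Nat.card_pos.ne'
  · rw [← hmul, sq]
    exact Nat.mul_le_mul hk hr
end
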